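/- arXiv:2110.15550 — 13 statements merged into one kernel-verified Lean document; each statement's English description precedes it below -/
import Mathlib

section
/- Suppose h > 0, x_k, x_{k+1}, x^* ∈ ℝⁿ and η_k ∈ ℝ satisfy the Lagrange multiplier scheme (x_{k+1} − x_k)/h = −D(Q(x_{k+1} + x_k)/2 + η_k ∇E(x^*)) and E(x_{k+1}) − E(x_k) = η_k ⟨∇E(x^*), x_{k+1} − x_k⟩. Then the discrete dissipation law V(x_{k+1}) ≤ V(x_k) holds. -/
open RealInnerProductSpace

/-- Discrete dissipation law for the Lagrange multiplier scheme (Theorem `thm:LMdisp`). -/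
theorem stmt_0 (n : ℕ) (hn : 1 ≤ n)
    (D Q : Matrix (Fin n) (Fin n) ℝ)
    (hD : ∀ v : EuclideanSpace ℝ (Fin n), v ≠ 0 → 0 < ⟪v, Matrix.toEuclideanLin D v⟫)
    (hQ : Q.IsSymm)
    (E : EuclideanSpace ℝ (Fin n) → ℝ)
    (gE : EuclideanSpace ℝ (Fin n) → EuclideanSpace ℝ (Fin n))
    (hE : ∀ x, HasGradientAt E (gE x) x)
    (V : EuclideanSpace ℝ (Fin n) → ℝ)
    (hV : ∀ x, V x = (1/2) * ⟪x, Matrix.toEuclideanLin Q x⟫ + E x)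
    (h : ℝ) (hh : 0 < h)
    (xk xk1 xs : EuclideanSpace ℝ (Fin n)) (η : ℝ)
    (hscheme1 : h⁻¹ • (xk1 - xk) =
      -(Matrix.toEuclideanLin D
        (Matrix.toEuclideanLin Q ((1/2 : ℝ) • (xk1 + xk)) + η • gE xs)))
    (hscheme2 : E xk1 - E xk = η * ⟪gE xs, xk1 - xk⟫) :
    V xk1 ≤ V xk := by
  have hsym : (Matrix.toEuclideanLin Q).IsSymmetric := by
    apply Matrix.isSymmetric_toEuclideanLin_iff.2
    rw [Matrix.IsHermitian, Matrix.conjTranspose_eq_transpose_of_trivial]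
    exact hQ
  set q := Matrix.toEuclideanLin Q with hq
  set w := q ((1/2 : ℝ) • (xk1 + xk)) + η • gE xs with hw
  have hdiff : xk1 - xk = -(h • Matrix.toEuclideanLin D w) := by
    rw [← smul_neg, ← hscheme1, smul_smul, mul_inv_cancel₀ hh.ne', one_smul]
  have hpos : 0 ≤ ⟪w, Matrix.toEuclideanLin D w⟫ := by
    by_cases hw0 : w = 0
    · rw [hw0]; simp
    · exact (hD w hw0).le
  have hle : ⟪w, xk1 - xk⟫ ≤ 0 := by
    rw [hdiff, inner_neg_right, inner_smul_right]
    have := mul_nonneg hh.le hpos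
    linarith
  have e1 : ⟪q xk1, xk⟫ = ⟪q xk, xk1⟫ := by
    rw [hsym xk1 xk, real_inner_comm]
  have hexp : ⟪w, xk1 - xk⟫ = V xk1 - V xk := by
    rw [hV, hV, hw, inner_add_left, real_inner_smul_left, ← hscheme2, map_smul, map_add,
      real_inner_smul_left, inner_add_left, inner_sub_right, inner_sub_right, e1,
      real_inner_comm xk1 (q xk1), real_inner_comm xk (q xk)]
    ring
  linarith
end

section
/- If f is convex, then for every t > 0 the solution of the gradient flow satisfies f(x(t)) − f⋆ ≤ ‖x₀ − x⋆‖²/(2t). -/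
open RealInnerProductSpace

/-- Gradient-flow rate for convex functions (Theorem `thm:convrate`). -/
theorem stmt_2 (n : ℕ) (hn : 1 ≤ n)
    (f : EuclideanSpace ℝ (Fin n) → ℝ)
    (f' : EuclideanSpace ℝ (Fin n) → EuclideanSpace ℝ (Fin n))
    (hf : ∀ x, HasGradientAt f (f' x) x)
    (hf'cont : Continuous f')
    (hconv : ConvexOn ℝ Set.univ f)
    (xstar : EuclideanSpace ℝ (Fin n)) (hstar : ∀ y, f xstar ≤ f y)
    (x : ℝ → EuclideanSpace ℝ (Fin n)) (x0 : EuclideanSpace ℝ (Fin n))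
    (hx0 : x 0 = x0)
    (hflow : ∀ t : ℝ, 0 ≤ t → HasDerivAt x (-(f' (x t))) t)
    (t : ℝ) (ht : 0 < t) :
    f (x t) - f xstar ≤ ‖x0 - xstar‖ ^ 2 / (2 * t) := by
  have hgrad : ∀ y z, f y + ⟪f' y, z - y⟫ ≤ f z := by
    intro y z
    have hl : HasDerivAt (fun s : ℝ => AffineMap.lineMap (k := ℝ) y z s) (z - y) 0 :=
      AffineMap.hasDerivAt_lineMap
    have hg : HasDerivAt (fun s : ℝ => f (AffineMap.lineMap (k := ℝ) y z s)) ⟪f' y, z - y⟫ 0 := by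
      have h1 : HasFDerivAt f (InnerProductSpace.toDual ℝ _ (f' y))
          (AffineMap.lineMap (k := ℝ) y z (0 : ℝ)) := by
        simpa using (hf y).hasFDerivAt
      simpa [Function.comp_def] using h1.comp_hasDerivAt (0 : ℝ) hl
    have hc : ConvexOn ℝ Set.univ (fun s : ℝ => f (AffineMap.lineMap (k := ℝ) y z s)) := by
      simpa [Function.comp_def] using hconv.comp_affineMap (AffineMap.lineMap (k := ℝ) y z)
    have h := hc.le_slope_of_hasDerivAt (Set.mem_univ 0) (Set.mem_univ 1) one_pos hg
    simp [slope_def_field] at h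
    linarith
  have hV : ∀ s : ℝ, 0 ≤ s → HasDerivAt
      (fun s => s * (f (x s) - f xstar) + ‖x s - xstar‖ ^ 2 / 2)
      ((f (x s) - f xstar) + s * (-‖f' (x s)‖ ^ 2) - ⟪f' (x s), x s - xstar⟫) s := by
    intro s hs
    have h1 : HasDerivAt (fun s => f (x s)) (-‖f' (x s)‖ ^ 2) s := by
      simpa [Function.comp_def] using
        (hf (x s)).hasFDerivAt.comp_hasDerivAt s (hflow s hs)
    have h2 := ((hflow s hs).sub_const xstar).norm_sq
    have h3 := ((hasDerivAt_id s).mul (h1.sub_const (f xstar))).add (h2.div_const 2)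
    refine h3.congr_deriv ?_
    rw [inner_neg_right, real_inner_comm]
    simp only [id]
    ring
  have hanti : AntitoneOn (fun s => s * (f (x s) - f xstar) + ‖x s - xstar‖ ^ 2 / 2)
      (Set.Ici (0 : ℝ)) := by
    apply antitoneOn_of_hasDerivWithinAt_nonpos (convex_Ici 0)
      (fun s hs => (hV s hs).continuousAt.continuousWithinAt)
      (fun s hs => (hV s (interior_subset hs)).hasDerivWithinAt)
    intro s hs
    have hs0 : 0 ≤ s := interior_subset hs
    have h := hgrad (x s) xstar
    have h4 : 0 ≤ s * ‖f' (x s)‖ ^ 2 := by positivity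
    rw [← neg_sub (x s) xstar, inner_neg_right] at h
    linarith
  have h := hanti (Set.mem_Ici.2 le_rfl) (Set.mem_Ici.2 ht.le) ht.le
  simp only [hx0, zero_mul, zero_add] at h
  rw [le_div_iff₀ (by positivity)]
  nlinarith [sq_nonneg ‖x t - xstar‖]
end

section
/- Suppose E is L_E-smooth (∇E is L_E-Lipschitz), ∇E(x_k) ≠ 0, the matrix I + (h/2)DQ is invertible, and there exist real numbers q_min and d_min with ⟨v, Qv⟩ ≥ q_min‖v‖² and ⟨v, D⁻¹v⟩ ≥ d_min‖v‖² for all v ∈ ℝⁿ, such that h(q_min − L_E) > −2 d_min. Then there exists η̄ ∈ ℝ such that F_h(η̄; x_k) > 0. -/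
open RealInnerProductSpace

theorem descent_aux {V : Type*} [NormedAddCommGroup V] [InnerProductSpace ℝ V] [CompleteSpace V]
    (E : V → ℝ) (gE : V → V) (hE : ∀ x, HasGradientAt E (gE x) x)
    (L : ℝ) (hL : ∀ x y, ‖gE x - gE y‖ ≤ L * ‖x - y‖) (x d : V) :
    E x + ⟪gE x, d⟫ - L / 2 * ‖d‖ ^ 2 ≤ E (x + d) := by
  have hder : ∀ t : ℝ, HasDerivAt
      (fun t : ℝ => E (x + t • d) - t * ⟪gE x, d⟫ + L / 2 * ‖d‖ ^ 2 * t ^ 2)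
      (⟪gE (x + t • d), d⟫ - ⟪gE x, d⟫ + L * ‖d‖ ^ 2 * t) t := by
    intro t
    have h1 : HasDerivAt (fun t : ℝ => x + t • d) d t := by
      simpa using ((hasDerivAt_id t).smul_const d).const_add x
    have h2 := (hE (x + t • d)).hasFDerivAt.comp_hasDerivAt t h1
    have h3 := (hasDerivAt_id t).mul_const ⟪gE x, d⟫
    have h4 := ((hasDerivAt_id t).pow 2).const_mul (L / 2 * ‖d‖ ^ 2)
    have h5 := (h2.sub h3).add h4
    refine h5.congr_deriv ?_
    simp
    ring
  have hmono : MonotoneOn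
      (fun t : ℝ => E (x + t • d) - t * ⟪gE x, d⟫ + L / 2 * ‖d‖ ^ 2 * t ^ 2) (Set.Ici 0) := by
    apply monotoneOn_of_deriv_nonneg (convex_Ici 0)
    · exact fun t _ => (hder t).continuousAt.continuousWithinAt
    · exact fun t _ => (hder t).differentiableAt.differentiableWithinAt
    · intro t ht
      rw [interior_Ici, Set.mem_Ioi] at ht
      rw [(hder t).deriv, ← inner_sub_left]
      have h1 := abs_real_inner_le_norm (gE (x + t • d) - gE x) d
      have h2 := hL (x + t • d) x
      rw [add_sub_cancel_left, norm_smul, Real.norm_of_nonneg ht.le] at h2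
      have h3 := mul_le_mul_of_nonneg_right h2 (norm_nonneg d)
      have h4 := neg_abs_le ⟪gE (x + t • d) - gE x, d⟫
      nlinarith
  have := hmono (Set.mem_Ici.2 le_rfl) (Set.mem_Ici.2 zero_le_one) zero_le_one
  simp at this
  linarith

theorem quad_aux (a b c : ℝ) (ha : 0 < a) : ∃ t : ℝ, 0 < a * t ^ 2 + b * t + c := by
  refine ⟨(|b| + |c| + 1) / a + 1, ?_⟩
  set t := (|b| + |c| + 1) / a + 1 with ht
  have h1 : a * t = |b| + |c| + 1 + a := by rw [ht]; field_simp
  have h2 : 1 ≤ t := by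
    have : 0 ≤ (|b| + |c| + 1) / a := by positivity
    linarith
  have h3 : a * t ^ 2 = (|b| + |c| + 1 + a) * t := by rw [← h1]; ring
  have h4 := neg_abs_le b
  have h5 := neg_abs_le c
  have h6 := abs_nonneg c
  rw [h3]
  nlinarith

/-- Positivity of `F_h` for large `η` (Lemma `lem:ex_gen_pos`). -/
theorem stmt_4 (n : ℕ) (hn : 1 ≤ n)
    (D Q : Matrix (Fin n) (Fin n) ℝ)
    (hD : ∀ v : EuclideanSpace ℝ (Fin n), v ≠ 0 → 0 < ⟪v, Matrix.toEuclideanLin D v⟫)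
    (hQ : Q.IsSymm)
    (E : EuclideanSpace ℝ (Fin n) → ℝ)
    (gE : EuclideanSpace ℝ (Fin n) → EuclideanSpace ℝ (Fin n))
    (hE : ∀ x, HasGradientAt E (gE x) x)
    (LE : ℝ) (hLE : ∀ x y, ‖gE x - gE y‖ ≤ LE * ‖x - y‖)
    (h : ℝ) (hh : 0 < h)
    (hM : IsUnit ((1 : Matrix (Fin n) (Fin n) ℝ) + (h/2) • (D * Q)))
    (xk : EuclideanSpace ℝ (Fin n)) (hgrad : gE xk ≠ 0)
    (qmin dmin : ℝ)
    (hqmin : ∀ v : EuclideanSpace ℝ (Fin n), qmin * ‖v‖ ^ 2 ≤ ⟪v, Matrix.toEuclideanLin Q v⟫)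
    (hdmin : ∀ v : EuclideanSpace ℝ (Fin n), dmin * ‖v‖ ^ 2 ≤ ⟪v, Matrix.toEuclideanLin D⁻¹ v⟫)
    (hstep : h * (qmin - LE) > -(2 * dmin))
    (pk qk : EuclideanSpace ℝ (Fin n))
    (hpk : pk = Matrix.toEuclideanLin
      (((1 : Matrix (Fin n) (Fin n) ℝ) + (h/2) • (D * Q))⁻¹
        * ((1 : Matrix (Fin n) (Fin n) ℝ) - (h/2) • (D * Q))) xk)
    (hqk : qk = Matrix.toEuclideanLin
      (((1 : Matrix (Fin n) (Fin n) ℝ) + (h/2) • (D * Q))⁻¹ * D) (gE xk))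
    (F : ℝ → ℝ)
    (hF : ∀ η : ℝ, F η =
      E (pk - (h * η) • qk) - E xk - η * ⟪gE xk, pk - (h * η) • qk - xk⟫) :
    ∃ η : ℝ, 0 < F η := by
  have hdet : IsUnit D.det := by
    rw [isUnit_iff_ne_zero]
    intro h0
    obtain ⟨v, hv, hv0⟩ := Matrix.exists_mulVec_eq_zero_iff.2 h0
    have hne : WithLp.toLp 2 v ≠ 0 := by
      intro hc
      apply hv
      simpa using hc
    have := hD (WithLp.toLp 2 v) hne
    rw [Matrix.toLpLin_toLp] at this
    simp [hv0] at this
  have hMdet := (Matrix.isUnit_iff_isUnit_det _).1 hM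
  set M := (1 : Matrix (Fin n) (Fin n) ℝ) + (h/2) • (D * Q) with hMdef
  have hmat : D⁻¹ * (M⁻¹ * D) + (h/2) • (Q * (M⁻¹ * D)) = 1 := by
    have h1 : D⁻¹ + (h/2) • Q = D⁻¹ * M := by
      rw [hMdef, mul_add, mul_one, mul_smul_comm, ← mul_assoc, Matrix.nonsing_inv_mul _ hdet,
        one_mul]
    calc _ = (D⁻¹ + (h/2) • Q) * (M⁻¹ * D) := by rw [add_mul, smul_mul_assoc]
      _ = D⁻¹ * (M * M⁻¹) * D := by rw [h1]; simp only [mul_assoc]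
      _ = 1 := by rw [Matrix.mul_nonsing_inv _ hMdet, mul_one, Matrix.nonsing_inv_mul _ hdet]
  have hg : Matrix.toEuclideanLin D⁻¹ qk + (h/2) • Matrix.toEuclideanLin Q qk = gE xk := by
    have := congrArg (fun A => Matrix.toEuclideanLin A (gE xk)) hmat
    rw [hqk]
    ext i
    have hi := congrArg (fun v : EuclideanSpace ℝ (Fin n) => v i) this
    simpa [Matrix.toLpLin_apply, Matrix.add_mulVec, Matrix.smul_mulVec] using hi
  have hq0 : qk ≠ 0 := by
    intro hc
    apply hgrad
    rw [← hg, hc]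
    simp
  have hqn : 0 < ‖qk‖ ^ 2 := by positivity
  have hin : ⟪gE xk, qk⟫ = ⟪qk, Matrix.toEuclideanLin D⁻¹ qk⟫
      + (h/2) * ⟪qk, Matrix.toEuclideanLin Q qk⟫ := by
    rw [real_inner_comm]
    conv_lhs => rw [← hg]
    rw [inner_add_right, real_inner_smul_right]
  have hlow : 0 < ⟪gE xk, qk⟫ - h / 2 * LE * ‖qk‖ ^ 2 := by
    have h1 := hdmin qk
    have h2 := mul_le_mul_of_nonneg_left (hqmin qk) (by positivity : 0 ≤ h / 2)
    have h3 : 0 < (dmin + h / 2 * qmin - h / 2 * LE) * ‖qk‖ ^ 2 :=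
      mul_pos (by linarith) hqn
    rw [hin]
    linarith
  obtain ⟨η, hη⟩ := quad_aux (h * (⟪gE xk, qk⟫ - h / 2 * LE * ‖qk‖ ^ 2))
    (-⟪gE xk, pk - xk⟫ - h * ⟪gE xk, qk⟫ + LE * h * ⟪pk - xk, qk⟫)
    (⟪gE xk, pk - xk⟫ - LE / 2 * ‖pk - xk‖ ^ 2) (mul_pos hh hlow)
  refine ⟨η, ?_⟩
  have hd := descent_aux E gE hE LE hLE xk ((pk - xk) - (h * η) • qk)
  have e1 : xk + ((pk - xk) - (h * η) • qk) = pk - (h * η) • qk := by abel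
  have e2 : pk - (h * η) • qk - xk = (pk - xk) - (h * η) • qk := by abel
  rw [e1, norm_sub_sq_real, norm_smul, mul_pow, Real.norm_eq_abs, sq_abs] at hd
  rw [hF, e2]
  simp only [inner_sub_right (𝕜 := ℝ) (gE xk) (pk - xk), real_inner_smul_right] at hd ⊢
  linarith
end

section
/- Suppose E is continuously differentiable and x_k ∈ ℝⁿ satisfies ⟨∇E(x_k), D∇V(x_k)⟩ ≠ 0, where ∇V(x) = Qx + ∇E(x). Then there exist η_underline ∈ ℝ and h̄ > 0 such that for every h with 0 < h < h̄, the matrix I + (h/2)DQ is invertible and F_h(η_underline; x_k) < 0. -/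
open RealInnerProductSpace

/-- Negativity of `F_h` at some `η` for small `h` (Lemma `lem:ex_gen_neg`). -/
theorem stmt_5 (n : ℕ) (hn : 1 ≤ n)
    (D Q : Matrix (Fin n) (Fin n) ℝ)
    (hD : ∀ v : EuclideanSpace ℝ (Fin n), v ≠ 0 → 0 < ⟪v, Matrix.toEuclideanLin D v⟫)
    (hQ : Q.IsSymm)
    (E : EuclideanSpace ℝ (Fin n) → ℝ)
    (gE : EuclideanSpace ℝ (Fin n) → EuclideanSpace ℝ (Fin n))
    (hE : ∀ x, HasGradientAt E (gE x) x)
    (hgEcont : Continuous gE)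
    (xk : EuclideanSpace ℝ (Fin n))
    (hne : ⟪gE xk, Matrix.toEuclideanLin D (Matrix.toEuclideanLin Q xk + gE xk)⟫ ≠ 0)
    (pk qk : ℝ → EuclideanSpace ℝ (Fin n))
    (hpk : ∀ h : ℝ, pk h = Matrix.toEuclideanLin
      (((1 : Matrix (Fin n) (Fin n) ℝ) + (h/2) • (D * Q))⁻¹
        * ((1 : Matrix (Fin n) (Fin n) ℝ) - (h/2) • (D * Q))) xk)
    (hqk : ∀ h : ℝ, qk h = Matrix.toEuclideanLin
      (((1 : Matrix (Fin n) (Fin n) ℝ) + (h/2) • (D * Q))⁻¹ * D) (gE xk))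
    (F : ℝ → ℝ → ℝ)
    (hF : ∀ h η : ℝ, F h η =
      E (pk h - (h * η) • qk h) - E xk
        - η * ⟪gE xk, pk h - (h * η) • qk h - xk⟫) :
    ∃ ηlow : ℝ, ∃ hbar : ℝ, 0 < hbar ∧ ∀ h : ℝ, 0 < h → h < hbar →
      IsUnit ((1 : Matrix (Fin n) (Fin n) ℝ) + (h/2) • (D * Q)) ∧ F h ηlow < 0 := by
  set M : ℝ → Matrix (Fin n) (Fin n) ℝ := fun h => 1 + (h/2) • (D * Q) with hM
  set T : Matrix (Fin n) (Fin n) ℝ → EuclideanSpace ℝ (Fin n) → EuclideanSpace ℝ (Fin n) :=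
    fun A v => Matrix.toEuclideanLin A v with hT
  have hTmul : ∀ A B v, T (A * B) v = T A (T B v) := by
    intro A B v
    simp only [hT]
    ext i
    simp [Matrix.toLpLin_apply]
  have hT1 : ∀ v, T 1 v = v := by
    intro v
    ext i
    simp [hT, Matrix.toLpLin_apply]
  have hMc : Continuous M := by
    simp only [hM]; fun_prop
  have hM0 : M 0 = 1 := by simp [hM]
  have hunit : ∀ᶠ h in nhds (0:ℝ), IsUnit (M h) := by
    have h1 : Continuous fun h => (M h).det := hMc.matrix_det
    have h2 : ∀ᶠ h in nhds (0:ℝ), (M h).det ≠ 0 :=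
      h1.continuousAt.eventually_ne (by simp [hM0])
    filter_upwards [h2] with h hh
    exact (Matrix.isUnit_iff_isUnit_det _).2 (isUnit_iff_ne_zero.2 hh)
  set g := gE xk with hg
  have hg0 : g ≠ 0 := by
    intro h0
    exact hne (by rw [h0]; simp)
  set a : ℝ := ⟪g, T D (T Q xk)⟫ with ha
  set b : ℝ := ⟪g, T D g⟫ with hb
  have hbpos : 0 < b := hD g hg0
  have hab : a + b ≠ 0 := by
    simpa [map_add, inner_add_right, ha, hb, hT] using hne
  set η : ℝ := 1 - (a + b) / (2 * b) with hη
  set u : EuclideanSpace ℝ (Fin n) := - T D (T Q xk) - η • T D g with hu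
  have hneg : ⟪g, u⟫ - η * ⟪g, u⟫ < 0 := by
    have h1 : ⟪g, u⟫ = -a - η * b := by
      simp [hu, inner_sub_right, inner_smul_right, ha, hb]
    have h2 : ⟪g, u⟫ - η * ⟪g, u⟫ = - ((a + b)^2 / (4 * b)) := by
      rw [h1, hη]; field_simp; ring
    rw [h2]
    have : 0 < (a+b)^2 := by positivity
    have : 0 < (a+b)^2 / (4*b) := by positivity
    linarith
  set y : ℝ → EuclideanSpace ℝ (Fin n) := fun h => pk h - (h * η) • qk h with hy
  have hyeq : ∀ h, IsUnit (M h) → y h = xk + h • T (M h)⁻¹ u := by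
    intro h hh
    have hdet : IsUnit (M h).det := (Matrix.isUnit_iff_isUnit_det _).1 hh
    have e1 : xk = T (M h)⁻¹ (T (M h) xk) := by
      rw [← hTmul, Matrix.nonsing_inv_mul _ hdet, hT1]
    have e2 : pk h = T (M h)⁻¹ (T (1 - (h/2) • (D * Q)) xk) := by
      rw [← hTmul]; exact hpk h
    have e3 : qk h = T (M h)⁻¹ (T D g) := by
      rw [← hTmul]; exact hqk h
    have e4 : T (1 - (h/2) • (D * Q)) xk = xk - (h/2) • T D (T Q xk) := by
      rw [← hTmul]; conv_rhs => rw [← hT1 xk]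
      simp [hT]
    have e5 : T (M h) xk = xk + (h/2) • T D (T Q xk) := by
      rw [← hTmul]; conv_rhs => rw [← hT1 xk]
      simp [hT, hM]
    have lin : T (1 - (h/2) • (D * Q)) xk - (h * η) • T D g = T (M h) xk + h • u := by
      rw [e4, e5, hu]; module
    simp only [hy]
    conv_rhs => rw [e1]
    rw [e2, e3]
    have := congrArg (T (M h)⁻¹) lin
    simpa only [hT, map_add, map_sub, map_smul] using this
  have hw : ContinuousAt (fun h => T (M h)⁻¹ u) 0 := by
    have h1 : ContinuousAt (fun h => (M h)⁻¹) 0 := by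
      have : (fun h => (M h)⁻¹) = fun h => Ring.inverse (M h).det • (M h).adjugate := by
        funext h; exact Matrix.inv_def _
      rw [this]
      simp only [Ring.inverse_eq_inv']
      exact (hMc.matrix_det.continuousAt.inv₀ (by simp [hM0])).smul
        hMc.matrix_adjugate.continuousAt
    have h2 : Continuous fun A : Matrix (Fin n) (Fin n) ℝ => T A u := by
      simp only [hT, Matrix.toLpLin_apply]
      fun_prop
    exact h2.continuousAt.comp (f := fun h => (M h)⁻¹) h1
  have hw0 : T (M 0)⁻¹ u = u := by rw [hM0]; simp [hT1]
  have hy0 : y 0 = xk := by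
    rw [hyeq 0 (by rw [hM0]; exact isUnit_one)]; simp
  have hyd : HasDerivAt y u 0 := by
    rw [hasDerivAt_iff_tendsto_slope]
    have h1 := hw.tendsto
    rw [hw0] at h1
    refine (h1.mono_left nhdsWithin_le_nhds).congr' ?_
    filter_upwards [hunit.filter_mono nhdsWithin_le_nhds, self_mem_nhdsWithin] with h hh hne0
    have hne0 : h ≠ 0 := hne0
    rw [slope_def_module, hy0, hyeq h hh]
    simp [smul_smul, hne0]
  have hFd : HasDerivAt (fun h => F h η) (⟪g, u⟫ - η * ⟪g, u⟫) 0 := by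
    have h1 : HasDerivAt (fun h => E (y h)) ⟪g, u⟫ 0 := by
      have hEx := (hE xk).hasFDerivAt
      rw [← hy0] at hEx
      have := hEx.comp_hasDerivAt 0 hyd
      simpa [hy0, Function.comp_def] using this
    have h2 : HasDerivAt (fun h => ⟪g, y h - xk⟫) ⟪g, u⟫ 0 := by
      have := (hasDerivAt_const (0:ℝ) g).inner ℝ (hyd.sub_const xk)
      simpa using this
    have h3 := (h1.sub_const (E xk)).sub (h2.const_mul η)
    refine h3.congr_of_eventuallyEq (Filter.Eventually.of_forall fun h => ?_)
    exact hF h η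
  have hF0 : F 0 η = 0 := by
    have : F 0 η = E (y 0) - E xk - η * ⟪g, y 0 - xk⟫ := hF 0 η
    rw [this, hy0]; simp
  have hev : ∀ᶠ h in nhdsWithin (0:ℝ) (Set.Ioi 0), IsUnit (M h) ∧ F h η < 0 := by
    have h1 := (hasDerivAt_iff_tendsto_slope.1 hFd).eventually (gt_mem_nhds hneg)
    have h2 := h1.filter_mono (nhdsWithin_mono (0:ℝ) (fun x (hx : 0 < x) => ne_of_gt hx))
    filter_upwards [h2, hunit.filter_mono nhdsWithin_le_nhds, self_mem_nhdsWithin] with h hs hh hp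
    have hp : 0 < h := hp
    refine ⟨hh, ?_⟩
    rw [slope_def_field, hF0, sub_zero, sub_zero, div_neg_iff] at hs
    rcases hs with hs | hs
    · linarith
    · exact hs.1
  obtain ⟨c, hc, hsub⟩ := mem_nhdsGT_iff_exists_Ioo_subset.1 hev
  exact ⟨η, c, hc, fun h h0 h1 => hsub ⟨h0, h1⟩⟩
end

section
/- Suppose E is L_E-smooth (∇E is L_E-Lipschitz) and continuously differentiable, and x_k ∈ ℝⁿ satisfies ⟨∇E(x_k), D∇V(x_k)⟩ ≠ 0, where ∇V(x) = Qx + ∇E(x). Then there exists h̄ > 0 such that for every h with 0 < h < h̄, the matrix I + (h/2)DQ is invertible and there exists η_k ∈ ℝ with F_h(η_k; x_k) = 0; i.e., the Lagrange multiplier scheme x_{k+1} = p_k − hη_k q_k has a solution. -/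
open RealInnerProductSpace


open Filter Topology

lemma aux_smul_deriv {V : Type*} [NormedAddCommGroup V] [NormedSpace ℝ V] (u : ℝ → V)
    (hu : ContinuousAt u 0) : HasDerivAt (fun h : ℝ => h • u h) (u 0) 0 := by
  rw [hasDerivAt_iff_tendsto_slope]
  have h1 : Tendsto u (𝓝[≠] 0) (𝓝 (u 0)) := hu.tendsto.mono_left nhdsWithin_le_nhds
  refine h1.congr' ?_
  filter_upwards [self_mem_nhdsWithin] with h hh
  have hh' : h ≠ 0 := hh
  simp [slope, smul_smul, hh']

lemma aux_pos (G : ℝ → ℝ) (c : ℝ) (hG : HasDerivAt G c 0) (h0 : G 0 = 0) (hc : 0 < c) :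
    ∀ᶠ h in 𝓝[>] (0:ℝ), 0 < G h := by
  rw [hasDerivAt_iff_tendsto_slope] at hG
  have h1 : Tendsto (slope G 0) (𝓝[>] 0) (𝓝 c) :=
    hG.mono_left (nhdsWithin_mono _ (fun x hx => ne_of_gt hx))
  filter_upwards [h1.eventually (lt_mem_nhds hc), self_mem_nhdsWithin] with h hs hh
  have hh' : 0 < h := hh
  simp only [slope, h0, vsub_eq_sub, sub_zero, smul_eq_mul] at hs
  exact (pos_iff_pos_of_mul_pos hs).1 (inv_pos.2 hh')

lemma aux_G {V : Type*} [NormedAddCommGroup V] [InnerProductSpace ℝ V] [CompleteSpace V]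
    (E : V → ℝ) (g x : V) (hE : HasGradientAt E g x) (u : ℝ → V) (hu : ContinuousAt u 0)
    (η : ℝ) :
    HasDerivAt (fun h : ℝ => E (x - h • u h) - E x + η * (h * ⟪g, u h⟫))
      ((η - 1) * ⟪g, u 0⟫) 0 := by
  have h1 := (aux_smul_deriv u hu).const_sub x
  have hE' : HasFDerivAt E (InnerProductSpace.toDual ℝ V g) (x - (0:ℝ) • u 0) := by
    simpa using hE.hasFDerivAt
  have h2 := hE'.comp_hasDerivAt (0:ℝ) h1
  have h3 : HasDerivAt (fun h : ℝ => h • (⟪g, u h⟫ : ℝ)) (⟪g, u 0⟫) 0 :=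
    aux_smul_deriv (fun h => (⟪g, u h⟫ : ℝ)) (continuousAt_const.inner hu)
  have h4 := (h2.sub_const (E x)).add (h3.const_mul η)
  refine HasDerivAt.congr_deriv h4 ?_
  rw [InnerProductSpace.toDual_apply_apply]
  rw [inner_neg_right]
  ring

/-- Existence of a solution of the Lagrange multiplier scheme (Theorem `thm:ex_gen`). -/
theorem stmt_6 (n : ℕ) (hn : 1 ≤ n)
    (D Q : Matrix (Fin n) (Fin n) ℝ)
    (hD : ∀ v : EuclideanSpace ℝ (Fin n), v ≠ 0 → 0 < ⟪v, Matrix.toEuclideanLin D v⟫)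
    (hQ : Q.IsSymm)
    (E : EuclideanSpace ℝ (Fin n) → ℝ)
    (gE : EuclideanSpace ℝ (Fin n) → EuclideanSpace ℝ (Fin n))
    (hE : ∀ x, HasGradientAt E (gE x) x)
    (hgEcont : Continuous gE)
    (LE : ℝ) (hLE : ∀ x y, ‖gE x - gE y‖ ≤ LE * ‖x - y‖)
    (xk : EuclideanSpace ℝ (Fin n))
    (hne : ⟪gE xk, Matrix.toEuclideanLin D (Matrix.toEuclideanLin Q xk + gE xk)⟫ ≠ 0)
    (pk qk : ℝ → EuclideanSpace ℝ (Fin n))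
    (hpk : ∀ h : ℝ, pk h = Matrix.toEuclideanLin
      (((1 : Matrix (Fin n) (Fin n) ℝ) + (h/2) • (D * Q))⁻¹
        * ((1 : Matrix (Fin n) (Fin n) ℝ) - (h/2) • (D * Q))) xk)
    (hqk : ∀ h : ℝ, qk h = Matrix.toEuclideanLin
      (((1 : Matrix (Fin n) (Fin n) ℝ) + (h/2) • (D * Q))⁻¹ * D) (gE xk))
    (F : ℝ → ℝ → ℝ)
    (hF : ∀ h η : ℝ, F h η =
      E (pk h - (h * η) • qk h) - E xk
        - η * ⟪gE xk, pk h - (h * η) • qk h - xk⟫) :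
    ∃ hbar : ℝ, 0 < hbar ∧ ∀ h : ℝ, 0 < h → h < hbar →
      IsUnit ((1 : Matrix (Fin n) (Fin n) ℝ) + (h/2) • (D * Q)) ∧
      ∃ η : ℝ, F h η = 0 := by
  have hEc : Continuous E := continuous_iff_continuousAt.2 fun x => (hE x).continuousAt
  set g := gE xk with hg
  set M : ℝ → Matrix (Fin n) (Fin n) ℝ := fun h => 1 + (h/2) • (D * Q) with hM
  have hMc : Continuous M := by fun_prop
  have hM0 : M 0 = 1 := by simp [hM]
  have hdet : ∀ᶠ h in 𝓝 (0:ℝ), (M h).det ≠ 0 := by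
    have : ContinuousAt (fun h => (M h).det) 0 := hMc.matrix_det.continuousAt
    exact this.eventually_ne (by simp [hM0])
  have hinv : ContinuousAt (fun h => (M h)⁻¹) 0 := by
    have : (fun h => (M h)⁻¹) = fun h => ((M h).det)⁻¹ • (M h).adjugate := by
      funext h
      rw [Matrix.inv_def, Ring.inverse_eq_inv']
    rw [this]
    exact (hMc.matrix_det.continuousAt.inv₀ (by simp [hM0])).smul
      hMc.matrix_adjugate.continuousAt
  have hcont : ∀ (B : Matrix (Fin n) (Fin n) ℝ) (v : EuclideanSpace ℝ (Fin n)),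
      ContinuousAt (fun h => Matrix.toEuclideanLin ((M h)⁻¹ * B) v) 0 := by
    intro B v
    let L : Matrix (Fin n) (Fin n) ℝ →ₗ[ℝ] EuclideanSpace ℝ (Fin n) :=
      (LinearMap.applyₗ v) ∘ₗ (Matrix.toEuclideanLin (𝕜 := ℝ) (m := Fin n) (n := Fin n)).toLinearMap
        ∘ₗ (LinearMap.mulRight ℝ B)
    have hL : Continuous L := L.continuous_of_finiteDimensional
    exact hL.continuousAt.comp hinv
  set a : ℝ → EuclideanSpace ℝ (Fin n) :=
    fun h => Matrix.toEuclideanLin ((M h)⁻¹ * (D * Q)) xk with ha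
  have hq0 : qk = fun h => Matrix.toEuclideanLin ((M h)⁻¹ * D) g := funext hqk
  have hqc : ContinuousAt qk 0 := by rw [hq0]; exact hcont D g
  have hac : ContinuousAt a 0 := hcont _ _
  have hp : ∀ h, (M h).det ≠ 0 → pk h = xk - h • a h := by
    intro h hd
    have hu : IsUnit (M h).det := isUnit_iff_ne_zero.2 hd
    have e : (M h)⁻¹ * (1 - (h/2) • (D * Q)) = 1 - h • ((M h)⁻¹ * (D * Q)) := by
      have : (1 - (h/2) • (D * Q)) = M h - h • (D * Q) := by
        simp only [hM]
        module
      rw [this, mul_sub, Matrix.nonsing_inv_mul _ hu, Matrix.mul_smul]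
    rw [hpk h]
    change Matrix.toEuclideanLin ((M h)⁻¹ * (1 - (h/2) • (D * Q))) xk = _
    rw [e]
    simp [ha, Matrix.toLpLin_one]
  have hFe : ∀ η h, (M h).det ≠ 0 → F h η =
      E (xk - h • (a h + η • qk h)) - E xk + η * (h * ⟪g, a h + η • qk h⟫) := by
    intro η h hd
    have e : pk h - (h * η) • qk h = xk - h • (a h + η • qk h) := by
      rw [hp h hd]; module
    rw [hF, e]
    have e2 : xk - h • (a h + η • qk h) - xk = -(h • (a h + η • qk h)) := by abel
    rw [e2, inner_neg_right, inner_smul_right]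
    ring
  have hder : ∀ η, HasDerivAt (fun h : ℝ => E (xk - h • (a h + η • qk h)) - E xk
      + η * (h * ⟪g, a h + η • qk h⟫)) ((η - 1) * ⟪g, a 0 + η • qk 0⟫) 0 := fun η =>
    aux_G E g xk (hE xk) (fun h => a h + η • qk h) (hac.add (hqc.const_smul η)) η
  set c : ℝ := ⟪g, a 0⟫ with hc
  set d : ℝ := ⟪g, qk 0⟫ with hd
  have hin : ∀ η : ℝ, ⟪g, a 0 + η • qk 0⟫ = c + η * d := by
    intro η; rw [inner_add_right, inner_smul_right]
  have hq00 : qk 0 = Matrix.toEuclideanLin D g := by rw [hq0]; simp [hM0]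
  have ha00 : a 0 = Matrix.toEuclideanLin D (Matrix.toEuclideanLin Q xk) := by
    simp [ha, hM0, Matrix.toLpLin_apply, Matrix.mulVec_mulVec]
  have hcd : c + d ≠ 0 := by
    rw [map_add, inner_add_right] at hne
    rwa [hc, hd, hq00, ha00]
  have hgne : g ≠ 0 := by
    intro h0
    apply hne
    rw [h0, inner_zero_left]
  have hdpos : 0 < d := by rw [hd, hq00]; exact hD g hgne
  obtain ⟨η1, h1⟩ : ∃ η : ℝ, (η - 1) * (c + η * d) < 0 := by
    refine ⟨(1 - c / d) / 2, ?_⟩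
    have : ((1 - c / d) / 2 - 1) * (c + (1 - c / d) / 2 * d) = -((c + d)^2 / (4 * d)) := by
      field_simp
      ring
    rw [this]
    have : 0 < (c + d)^2 := by positivity
    have : 0 < (c + d)^2 / (4 * d) := by positivity
    linarith
  obtain ⟨η2, h2⟩ : ∃ η : ℝ, 0 < (η - 1) * (c + η * d) := by
    refine ⟨2 + |c| / d, ?_⟩
    have e : (2 + |c| / d) * d = 2 * d + |c| := by field_simp
    rw [e]
    have h3 : 0 ≤ |c| / d := by positivity
    have h4 := neg_abs_le c
    apply mul_pos <;> linarith
  have ev1 := aux_pos _ _ (hder η1).neg (by simp) (by rw [hin]; linarith)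
  have ev2 := aux_pos _ _ (hder η2) (by simp) (by rw [hin]; exact h2)
  have ev := (ev1.and ev2).and (hdet.filter_mono nhdsWithin_le_nhds)
  obtain ⟨b, hb, hb'⟩ := mem_nhdsGT_iff_exists_Ioo_subset.1 ev
  refine ⟨b, hb, fun h hh0 hhb => ?_⟩
  obtain ⟨⟨k1, k2⟩, k3⟩ := hb' ⟨hh0, hhb⟩
  refine ⟨(Matrix.isUnit_iff_isUnit_det _).2 (isUnit_iff_ne_zero.2 k3), ?_⟩
  have hFc : Continuous (F h) := by
    have : F h = fun η => E (pk h - (h * η) • qk h) - E xk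
        - η * ⟪g, pk h - (h * η) • qk h - xk⟫ := funext (hF h)
    rw [this]
    fun_prop
  simp only [Pi.neg_apply] at k1
  rw [← hFe η1 h k3] at k1
  rw [← hFe η2 h k3] at k2
  exact mem_range_of_exists_le_of_exists_ge hFc ⟨η1, by linarith⟩ ⟨η2, k2.le⟩
end

section
/- For every h > 0 and every x_k ∈ ℝⁿ, there exists η_k ∈ ℝ satisfying F_h(η_k; x_k) = 0 and η_k ≥ η_LB = (1 + Lh/2)⁻¹ > 0. -/
open RealInnerProductSpace

/-- Existence of a solution with a lower bound (Theorem `thm:sol1`). -/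
theorem stmt_7 (n : ℕ) (hn : 1 ≤ n)
    (f : EuclideanSpace ℝ (Fin n) → ℝ)
    (f' : EuclideanSpace ℝ (Fin n) → EuclideanSpace ℝ (Fin n))
    (hf : ∀ x, HasGradientAt f (f' x) x)
    (L : ℝ) (hL : 0 < L)
    (hLip : ∀ x y, ‖f' x - f' y‖ ≤ L * ‖x - y‖)
    (xstar : EuclideanSpace ℝ (Fin n)) (hstar : ∀ y, f xstar ≤ f y)
    (F : ℝ → ℝ → EuclideanSpace ℝ (Fin n) → ℝ)
    (hF : ∀ (h η : ℝ) (x : EuclideanSpace ℝ (Fin n)),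
      F h η x = f (x - (η * h) • f' x) - f x + h * η ^ 2 * ‖f' x‖ ^ 2) :
    ∀ h : ℝ, 0 < h → ∀ xk : EuclideanSpace ℝ (Fin n),
      ∃ ηk : ℝ, F h ηk xk = 0 ∧ (1 + L * h / 2)⁻¹ ≤ ηk ∧ 0 < (1 + L * h / 2)⁻¹ := by
  intro h hh xk
  have hpos : 0 < 1 + L * h / 2 := by positivity
  have hinv : 0 < (1 + L * h / 2)⁻¹ := inv_pos.mpr hpos
  set e : ℝ := (1 + L * h / 2)⁻¹ with he
  set g := f' xk with hg
  by_cases hg0 : g = 0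
  · exact ⟨e, by rw [hF, ← hg, hg0]; simp, le_refl _, hinv⟩
  have hgn : 0 < ‖g‖ := norm_pos_iff.mpr hg0
  have hd : ∀ t : ℝ, HasDerivAt (fun t : ℝ => f (xk - t • g)) (-⟪f' (xk - t • g), g⟫) t := by
    intro t
    have h1 : HasDerivAt (fun t : ℝ => xk - t • g) (-g) t := by
      have := ((hasDerivAt_id t).smul_const g).const_sub xk
      simpa using this
    have h2 := (hf (xk - t • g)).hasFDerivAt.comp_hasDerivAt t h1
    refine HasDerivAt.congr_deriv (f := fun t : ℝ => f (xk - t • g)) h2 ?_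
    simp [inner_neg_right]
  have hdphi : ∀ t : ℝ, HasDerivAt
      (fun t : ℝ => f (xk - t • g) + (t * ‖g‖ ^ 2 - L / 2 * ‖g‖ ^ 2 * t ^ 2))
      (-⟪f' (xk - t • g), g⟫ + (‖g‖ ^ 2 - L * ‖g‖ ^ 2 * t)) t := by
    intro t
    have h1 := ((hasDerivAt_id t).mul_const (‖g‖ ^ 2)).sub
      (((hasDerivAt_id t).pow 2).const_mul (L / 2 * ‖g‖ ^ 2))
    refine (hd t).add (h1.congr_deriv ?_)
    simp
    ring
  have hanti : AntitoneOn
      (fun t : ℝ => f (xk - t • g) + (t * ‖g‖ ^ 2 - L / 2 * ‖g‖ ^ 2 * t ^ 2)) (Set.Ici 0) := by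
    apply antitoneOn_of_deriv_nonpos (convex_Ici 0)
    · exact fun t _ => (hdphi t).continuousAt.continuousWithinAt
    · exact fun t _ => (hdphi t).differentiableAt.differentiableWithinAt
    · intro t ht
      rw [interior_Ici] at ht
      have ht : 0 < t := ht
      rw [(hdphi t).deriv]
      have h1 : ⟪g - f' (xk - t • g), g⟫ ≤ ‖g - f' (xk - t • g)‖ * ‖g‖ := real_inner_le_norm _ _
      have h2 := hLip xk (xk - t • g)
      rw [← hg, sub_sub_cancel, norm_smul, Real.norm_of_nonneg ht.le] at h2
      have h3 := mul_le_mul_of_nonneg_right h2 hgn.le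
      rw [inner_sub_left, real_inner_self_eq_norm_sq] at h1
      nlinarith
  have hlo : F h e xk ≤ 0 := by
    have h1 := hanti (Set.self_mem_Ici) (show e * h ∈ Set.Ici (0 : ℝ) from by
      simp only [Set.mem_Ici]; positivity) (by positivity)
    simp only [zero_smul, sub_zero] at h1
    rw [hF, ← hg]
    have h2 : e * (1 + L * h / 2) = 1 := inv_mul_cancel₀ hpos.ne'
    have h3 : h * e ^ 2 * ‖g‖ ^ 2 = e * h * ‖g‖ ^ 2 - L / 2 * ‖g‖ ^ 2 * (e * h) ^ 2 := by
      linear_combination (h * e * ‖g‖ ^ 2) * h2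
    linarith
  have hfx : 0 ≤ f xk - f xstar := sub_nonneg.mpr (hstar xk)
  set q : ℝ := (f xk - f xstar) / (h * ‖g‖ ^ 2) with hq
  have hq0 : 0 ≤ q := by positivity
  have hqm : q * (h * ‖g‖ ^ 2) = f xk - f xstar := div_mul_cancel₀ _ (by positivity)
  have hhi : 0 ≤ F h (e + q + 1) xk := by
    rw [hF, ← hg]
    have h1 := hstar (xk - ((e + q + 1) * h) • g)
    have h2 : q ≤ (e + q + 1) ^ 2 := by nlinarith
    have h3 := mul_le_mul_of_nonneg_right h2 (show 0 ≤ h * ‖g‖ ^ 2 by positivity)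
    linarith
  have hfc : Continuous f :=
    continuous_iff_continuousAt.mpr fun x => (hf x).hasFDerivAt.continuousAt
  have hc : Continuous (fun η => F h η xk) := by
    simp only [hF]
    fun_prop
  obtain ⟨η, hη, hη0⟩ := intermediate_value_Icc (show e ≤ e + q + 1 by linarith)
    hc.continuousOn ⟨hlo, hhi⟩
  exact ⟨η, hη0, hη.1, hinv⟩
end

section
/- Suppose ∇f(x_k) ≠ 0 and 0 < h ≤ 2/L. If η_k > 0 satisfies F_h(η_k; x_k) = 0, then η_LB ≤ η_k ≤ (1 − Lh/2)⁻¹ (where for h = 2/L the upper bound is interpreted as η_k(1 − Lh/2) ≤ 1). -/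
open RealInnerProductSpace

/-- Bounds on positive solutions for small step sizes (Theorem `thm:ub`). -/
theorem stmt_8 (n : ℕ) (hn : 1 ≤ n)
    (f : EuclideanSpace ℝ (Fin n) → ℝ)
    (f' : EuclideanSpace ℝ (Fin n) → EuclideanSpace ℝ (Fin n))
    (hf : ∀ x, HasGradientAt f (f' x) x)
    (L : ℝ) (hL : 0 < L)
    (hLip : ∀ x y, ‖f' x - f' y‖ ≤ L * ‖x - y‖)
    (xstar : EuclideanSpace ℝ (Fin n)) (hstar : ∀ y, f xstar ≤ f y)
    (F : ℝ → ℝ → EuclideanSpace ℝ (Fin n) → ℝ)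
    (hF : ∀ (h η : ℝ) (x : EuclideanSpace ℝ (Fin n)),
      F h η x = f (x - (η * h) • f' x) - f x + h * η ^ 2 * ‖f' x‖ ^ 2)
    (h : ℝ) (hh : 0 < h) (hh2 : h ≤ 2 / L)
    (xk : EuclideanSpace ℝ (Fin n)) (hgrad : f' xk ≠ 0)
    (ηk : ℝ) (hηk : 0 < ηk) (hsol : F h ηk xk = 0) :
    (1 + L * h / 2)⁻¹ ≤ ηk ∧ ηk * (1 - L * h / 2) ≤ 1 := by
  set g := f' xk with hg
  have hG : 0 < ‖g‖ ^ 2 := by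
    have := norm_pos_iff.mpr hgrad
    positivity
  have hd : ∀ t : ℝ, HasDerivAt (fun t : ℝ => f (xk - t • g) - f xk + t * ‖g‖ ^ 2)
      (inner ℝ (f' (xk - t • g)) (-g) + ‖g‖ ^ 2) t := by
    intro t
    have h1 : HasDerivAt (fun t : ℝ => xk - t • g) (-g) t := by
      simpa using ((hasDerivAt_id t).smul_const g).const_sub xk
    have h2 := (hf (xk - t • g)).hasFDerivAt.comp_hasDerivAt t h1
    have h3 : HasDerivAt (fun t : ℝ => t * ‖g‖ ^ 2) (‖g‖ ^ 2) t := by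
      simpa using (hasDerivAt_id t).mul_const (‖g‖ ^ 2)
    exact (h2.sub_const (f xk)).add h3
  have hB : ∀ t : ℝ, HasDerivAt (fun t : ℝ => L * ‖g‖ ^ 2 / 2 * t ^ 2) (L * ‖g‖ ^ 2 * t) t := by
    intro t
    have := (hasDerivAt_pow 2 t).const_mul (L * ‖g‖ ^ 2 / 2)
    exact this.congr_deriv (by push_cast; ring)
  have hs : 0 < ηk * h := by positivity
  have key := image_norm_le_of_norm_deriv_right_le_deriv_boundary (a := 0) (b := ηk * h)
    (fun t _ => (hd t).continuousAt.continuousWithinAt)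
    (fun t _ => (hd t).hasDerivWithinAt) (B := fun t : ℝ => L * ‖g‖ ^ 2 / 2 * t ^ 2)
    (by simp) hB
    (by
      intro t ht
      have e : inner ℝ (f' (xk - t • g)) (-g) + ‖g‖ ^ 2
          = inner ℝ (f' xk - f' (xk - t • g)) g := by
        rw [inner_sub_left, inner_neg_right, ← hg, real_inner_self_eq_norm_sq]
        ring
      rw [e]
      have h1 := norm_inner_le_norm (𝕜 := ℝ) (f' xk - f' (xk - t • g)) g
      have h2 := hLip xk (xk - t • g)
      rw [sub_sub_cancel, norm_smul, Real.norm_of_nonneg ht.1] at h2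
      have h3 := mul_le_mul_of_nonneg_right h2 (norm_nonneg g)
      calc _ ≤ _ := h1
        _ ≤ _ := h3
        _ = _ := by ring)
    (Set.right_mem_Icc.mpr hs.le)
  rw [hF] at hsol
  simp only [← hg] at hsol
  have e : f (xk - (ηk * h) • g) - f xk + ηk * h * ‖g‖ ^ 2
      = (ηk * h * ‖g‖ ^ 2) * (1 - ηk) := by linear_combination hsol
  rw [Real.norm_eq_abs, e, abs_le] at key
  have hc : 0 < ηk * h * ‖g‖ ^ 2 := by positivity
  constructor
  · rw [inv_le_iff_one_le_mul₀ (by positivity)]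
    refine le_of_mul_le_mul_left ?_ hc
    linarith [key.2]
  · refine le_of_mul_le_mul_left ?_ hc
    linarith [key.1]
end

section
/- Suppose f is convex and ∇f(x_k) ≠ 0. Then for every h > 0 there exists a unique nontrivial solution η_k ≠ 0 of the scalar equation F_h(η_k; x_k) = 0, and it satisfies η_LB ≤ η_k ≤ 1. -/
open RealInnerProductSpace

/-- Unique nontrivial solution in the convex case (Theorem `thm:ubconv`). -/
theorem stmt_9 (n : ℕ) (hn : 1 ≤ n)
    (f : EuclideanSpace ℝ (Fin n) → ℝ)
    (f' : EuclideanSpace ℝ (Fin n) → EuclideanSpace ℝ (Fin n))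
    (hf : ∀ x, HasGradientAt f (f' x) x)
    (L : ℝ) (hL : 0 < L)
    (hLip : ∀ x y, ‖f' x - f' y‖ ≤ L * ‖x - y‖)
    (xstar : EuclideanSpace ℝ (Fin n)) (hstar : ∀ y, f xstar ≤ f y)
    (F : ℝ → ℝ → EuclideanSpace ℝ (Fin n) → ℝ)
    (hF : ∀ (h η : ℝ) (x : EuclideanSpace ℝ (Fin n)),
      F h η x = f (x - (η * h) • f' x) - f x + h * η ^ 2 * ‖f' x‖ ^ 2)
    (hconv : ConvexOn ℝ Set.univ f)
    (h : ℝ) (hh : 0 < h)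
    (xk : EuclideanSpace ℝ (Fin n)) (hgrad : f' xk ≠ 0) :
    ∃ ηk : ℝ, (ηk ≠ 0 ∧ F h ηk xk = 0 ∧ (1 + L * h / 2)⁻¹ ≤ ηk ∧ ηk ≤ 1) ∧
      ∀ η : ℝ, η ≠ 0 → F h η xk = 0 → η = ηk := by
  set g := f' xk with hg
  have hgpos : 0 < ‖g‖ := norm_pos_iff.mpr hgrad
  set c := h * ‖g‖ ^ 2 with hc
  have hcpos : 0 < c := by positivity
  set φ : ℝ → ℝ := fun t => f (xk - (t * h) • g) with hφ
  have hF' : ∀ t, F h t xk = φ t - φ 0 + c * t ^ 2 := by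
    intro t
    rw [hF]
    simp only [hφ, hc, zero_mul, zero_smul, sub_zero]
    ring
  have hder : ∀ t, HasDerivAt φ (-(h * inner ℝ (f' (xk - (t * h) • g)) g)) t := by
    intro t
    have h1 : HasDerivAt (fun t : ℝ => xk - (t * h) • g) (-(h • g)) t := by
      have h2 : HasDerivAt (fun t : ℝ => t * h) h t := by
        simpa using (hasDerivAt_id t).mul_const h
      exact (h2.smul_const g).const_sub xk
    have h3 := (hf (xk - (t * h) • g)).hasFDerivAt.comp_hasDerivAt t h1
    rw [InnerProductSpace.toDual_apply_apply, inner_neg_right, inner_smul_right] at h3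
    exact h3
  have hcont : Continuous φ :=
    continuous_iff_continuousAt.mpr fun t => (hder t).continuousAt
  have hconvφ : ConvexOn ℝ Set.univ φ := by
    refine ⟨convex_univ, ?_⟩
    intro s _ t _ a b ha hb hab
    have h1 := hconv.2 (Set.mem_univ (xk - (s * h) • g)) (Set.mem_univ (xk - (t * h) • g)) ha hb hab
    have h2 : a • (xk - (s * h) • g) + b • (xk - (t * h) • g)
        = xk - ((a • s + b • t) * h) • g := by
      have hb' : b = 1 - a := by linarith
      subst hb'
      simp only [smul_eq_mul]
      module
    rw [h2] at h1
    exact h1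
  have hder0 : HasDerivAt φ (-c) 0 := by
    have h1 := hder 0
    simp only [zero_mul, zero_smul, sub_zero] at h1
    rw [← hg, real_inner_self_eq_norm_sq] at h1
    exact h1
  -- three distinct zeros are impossible
  have three : ∀ u v w : ℝ, u < v → v < w → F h u xk = 0 → F h v xk = 0 → F h w xk = 0 →
      False := by
    intro u v w huv hvw hu hv hw
    rw [hF'] at hu hv hw
    have h1 := hconvφ.slope_mono_adjacent (Set.mem_univ u) (Set.mem_univ w) huv hvw
    have e1 : (φ v - φ u) / (v - u) = -c * (v + u) := by
      rw [div_eq_iff (by linarith)]; linarith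
    have e2 : (φ w - φ v) / (w - v) = -c * (w + v) := by
      rw [div_eq_iff (by linarith)]; linarith
    rw [e1, e2] at h1
    nlinarith [mul_pos hcpos (show 0 < w - u by linarith)]
  -- descent lemma
  have hdesc : ∀ t : ℝ, 0 ≤ t → φ t - φ 0 ≤ -c * t + c * (L * h / 2) * t ^ 2 := by
    have hd : ∀ t : ℝ, HasDerivAt (fun t => φ t + c * t - c * (L * h / 2) * t ^ 2)
        (-(h * inner ℝ (f' (xk - (t * h) • g)) g) + c - c * (L * h / 2) * (2 * t)) t := by
      intro t
      have h1 : HasDerivAt (fun t : ℝ => c * t) c t := by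
        simpa using (hasDerivAt_id t).const_mul c
      have h2 : HasDerivAt (fun t : ℝ => c * (L * h / 2) * t ^ 2)
          (c * (L * h / 2) * (2 * t)) t := by
        simpa using (hasDerivAt_pow 2 t).const_mul (c * (L * h / 2))
      exact ((hder t).add h1).sub h2
    have hanti : AntitoneOn (fun t => φ t + c * t - c * (L * h / 2) * t ^ 2) (Set.Ici 0) := by
      apply antitoneOn_of_deriv_nonpos (convex_Ici 0)
      · exact fun t _ => (hd t).continuousAt.continuousWithinAt
      · exact fun t _ => (hd t).differentiableAt.differentiableWithinAt
      · intro t ht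
        rw [interior_Ici] at ht
        have ht0 : 0 < t := ht
        rw [(hd t).deriv]
        have h1 : inner ℝ (g - f' (xk - (t * h) • g)) g ≤ L * (t * h * ‖g‖) * ‖g‖ := by
          refine (real_inner_le_norm _ _).trans ?_
          refine mul_le_mul_of_nonneg_right ?_ hgpos.le
          have h2 := hLip xk (xk - (t * h) • g)
          rw [sub_sub_cancel, norm_smul, Real.norm_of_nonneg (by positivity)] at h2
          exact h2
        rw [inner_sub_left, real_inner_self_eq_norm_sq] at h1
        have h3 := mul_le_mul_of_nonneg_left h1 hh.le
        rw [hc]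
        linarith
    intro t ht
    have h1 := hanti (Set.mem_Ici.mpr le_rfl) (Set.mem_Ici.mpr ht) ht
    simp only at h1
    linarith
  have hLh : 0 < L * h := mul_pos hL hh
  have hpos : 0 < 1 + L * h / 2 := by linarith
  set e := (1 + L * h / 2)⁻¹ with he
  have hepos : 0 < e := inv_pos.mpr hpos
  have hee : (1 + L * h / 2) * e = 1 := mul_inv_cancel₀ hpos.ne'
  have hele : e ≤ 1 := inv_le_one_of_one_le₀ (by linarith)
  have hlo : φ e - φ 0 + c * e ^ 2 ≤ 0 := by
    have h1 := hdesc e hepos.le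
    have h2 : -c * e + c * (L * h / 2) * e ^ 2 + c * e ^ 2
      = c * e * ((1 + L * h / 2) * e - 1) := by ring
    rw [hee] at h2
    linarith
  have hhi : 0 ≤ φ 1 - φ 0 + c * 1 ^ 2 := by
    have h1 := hconvφ.le_slope_of_hasDerivAt (Set.mem_univ 0) (Set.mem_univ 1) one_pos hder0
    rw [slope_def_field] at h1
    norm_num at h1 ⊢
    linarith
  have hcG : Continuous (fun t => φ t - φ 0 + c * t ^ 2) := by fun_prop
  obtain ⟨r, ⟨hr1, hr2⟩, hr⟩ := intermediate_value_Icc hele hcG.continuousOn ⟨hlo, hhi⟩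
  have hrF : F h r xk = 0 := by rw [hF']; exact hr
  have h0F : F h 0 xk = 0 := by rw [hF']; ring
  have hrpos : 0 < r := lt_of_lt_of_le hepos hr1
  refine ⟨r, ⟨hrpos.ne', hrF, hr1, hr2⟩, ?_⟩
  intro η hη hηF
  by_contra hne
  rcases lt_or_gt_of_ne hη with h1 | h1
  · exact three η 0 r h1 hrpos hηF h0F hrF
  · rcases lt_or_gt_of_ne hne with h2 | h2
    · exact three 0 η r h1 h2 h0F hηF hrF
    · exact three 0 r η hrpos h2 h0F hrF hηF
end

section
/- Suppose f satisfies the Polyak–Łojasiewicz inequality with parameter μ > 0 and ∇f(x_k) ≠ 0. Then for every h > 0 there exists a solution η_k of F_h(η_k; x_k) = 0 with η_LB ≤ η_k ≤ (2μh)^{−1/2}. -/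
open RealInnerProductSpace

/-- Existence of a nontrivial solution with bounds under the PŁ inequality (Theorem `thm:ubPL`). -/
theorem stmt_10 (n : ℕ) (hn : 1 ≤ n)
    (f : EuclideanSpace ℝ (Fin n) → ℝ)
    (f' : EuclideanSpace ℝ (Fin n) → EuclideanSpace ℝ (Fin n))
    (hf : ∀ x, HasGradientAt f (f' x) x)
    (L : ℝ) (hL : 0 < L)
    (hLip : ∀ x y, ‖f' x - f' y‖ ≤ L * ‖x - y‖)
    (xstar : EuclideanSpace ℝ (Fin n)) (hstar : ∀ y, f xstar ≤ f y)
    (F : ℝ → ℝ → EuclideanSpace ℝ (Fin n) → ℝ)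
    (hF : ∀ (h η : ℝ) (x : EuclideanSpace ℝ (Fin n)),
      F h η x = f (x - (η * h) • f' x) - f x + h * η ^ 2 * ‖f' x‖ ^ 2)
    (μ : ℝ) (hμ : 0 < μ)
    (hPL : ∀ y, μ * (f y - f xstar) ≤ (1/2) * ‖f' y‖ ^ 2)
    (h : ℝ) (hh : 0 < h)
    (xk : EuclideanSpace ℝ (Fin n)) (hgrad : f' xk ≠ 0) :
    ∃ ηk : ℝ, F h ηk xk = 0 ∧ (1 + L * h / 2)⁻¹ ≤ ηk ∧
      ηk ≤ (Real.sqrt (2 * μ * h))⁻¹ := by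
  have hd : ∀ t : ℝ, HasDerivAt (fun t : ℝ => f (xk - t • f' xk))
      (-(inner ℝ (f' (xk - t • f' xk)) (f' xk))) t := by
    intro t
    have h1 : HasDerivAt (fun t : ℝ => xk - t • f' xk) (-((1:ℝ) • f' xk)) t :=
      ((hasDerivAt_id t).smul_const (f' xk)).const_sub xk
    have h2 := (hf (xk - t • f' xk)).hasFDerivAt.comp_hasDerivAt t h1
    simpa [Function.comp_def] using h2
  have hG : 0 < ‖f' xk‖ ^ 2 := by
    have := norm_pos_iff.mpr hgrad
    positivity
  set G := ‖f' xk‖ ^ 2 with hGdef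
  have hcont : Continuous (fun t : ℝ => f (xk - t • f' xk)) :=
    continuous_iff_continuousAt.mpr fun t => (hd t).continuousAt
  have hdesc : ∀ t : ℝ, 0 ≤ t → f (xk - t • f' xk) ≤ f xk - t * G + L / 2 * t ^ 2 * G := by
    have hd2 : ∀ t : ℝ, HasDerivAt
        (fun t : ℝ => f (xk - t • f' xk) + (t * G - t ^ 2 * (L / 2 * G)))
        (-(inner ℝ (f' (xk - t • f' xk)) (f' xk)) + (1 * G - (2 * t) * (L / 2 * G))) t := by
      intro t
      have h3 : HasDerivAt (fun t : ℝ => t ^ 2) (2 * t) t := by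
        simpa using hasDerivAt_pow 2 t
      exact (hd t).add (((hasDerivAt_id t).mul_const G).sub (h3.mul_const _))
    have hanti : AntitoneOn
        (fun t : ℝ => f (xk - t • f' xk) + (t * G - t ^ 2 * (L / 2 * G))) (Set.Ici 0) := by
      apply antitoneOn_of_deriv_nonpos (convex_Ici 0)
      · exact fun t _ => (hd2 t).continuousAt.continuousWithinAt
      · exact fun t _ => (hd2 t).differentiableAt.differentiableWithinAt
      · intro t ht
        rw [interior_Ici] at ht
        have ht' : 0 < t := ht
        rw [(hd2 t).deriv]
        have h4 := real_inner_le_norm (f' xk - f' (xk - t • f' xk)) (f' xk)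
        rw [inner_sub_left, real_inner_self_eq_norm_sq] at h4
        have h5 := hLip xk (xk - t • f' xk)
        rw [sub_sub_cancel, norm_smul, Real.norm_of_nonneg ht'.le] at h5
        have h6 := mul_le_mul_of_nonneg_right h5 (norm_nonneg (f' xk))
        have h7 : L * (t * ‖f' xk‖) * ‖f' xk‖ = L * t * G := by rw [hGdef]; ring
        rw [← hGdef] at h4
        linarith
    intro t ht
    have := hanti (Set.mem_Ici.mpr le_rfl) (Set.mem_Ici.mpr ht) ht
    simp at this
    linarith
  have hc : 0 < 1 + L * h / 2 := by positivity
  have hle : ∀ η : ℝ, 0 ≤ η → F h η xk ≤ h * η * G * (η * (1 + L * h / 2) - 1) := by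
    intro η hη
    rw [hF]
    have := hdesc (η * h) (by positivity)
    linarith
  have hs : 0 < Real.sqrt (2 * μ * h) := Real.sqrt_pos.mpr (by positivity)
  have hub : 0 ≤ F h (Real.sqrt (2 * μ * h))⁻¹ xk := by
    rw [hF, inv_pow, Real.sq_sqrt (by positivity)]
    have h1 := hstar (xk - ((Real.sqrt (2 * μ * h))⁻¹ * h) • f' xk)
    have h2 := hPL xk
    have h3 : h * (2 * μ * h)⁻¹ * ‖f' xk‖ ^ 2 = (1/2 * ‖f' xk‖ ^ 2) / μ := by
      field_simp
    have h4 : f xk - f xstar ≤ (1/2 * ‖f' xk‖ ^ 2) / μ := by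
      rw [le_div_iff₀ hμ]; linarith
    linarith
  have hlb : F h (1 + L * h / 2)⁻¹ xk ≤ 0 := by
    have := hle (1 + L * h / 2)⁻¹ (by positivity)
    rw [inv_mul_cancel₀ hc.ne'] at this
    simpa using this
  have hord : (1 + L * h / 2)⁻¹ ≤ (Real.sqrt (2 * μ * h))⁻¹ := by
    by_contra hlt
    push Not at hlt
    have h1 := hle (Real.sqrt (2 * μ * h))⁻¹ (by positivity)
    have h2 := mul_lt_mul_of_pos_right hlt hc
    rw [inv_mul_cancel₀ hc.ne'] at h2
    have h3 : 0 < h * (Real.sqrt (2 * μ * h))⁻¹ * G := by positivity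
    have := mul_neg_of_pos_of_neg h3 (sub_neg.mpr h2)
    linarith
  have hcF : Continuous (fun η : ℝ => F h η xk) := by
    simp only [hF]
    have := hcont.comp (continuous_id.mul (continuous_const (y := h)))
    simp only [Function.comp_def, id] at this
    exact (this.sub continuous_const).add (by fun_prop)
  obtain ⟨η, hη, h0⟩ := intermediate_value_Icc hord hcF.continuousOn ⟨hlb, hub⟩
  exact ⟨η, h0, hη.1, hη.2⟩
end

section
/- Let (x_k), (η_k) satisfy the scheme with η_k > 0 for every k. Then Σ_{k=0}^∞ ‖∇f(x_k)‖² ≤ (Lh/2 + 1)² (f(x₀) − f⋆)/h, and for every k ≥ 0, min over 0 ≤ i ≤ k of ‖∇f(x_i)‖ ≤ (Lh/2 + 1) sqrt((f(x₀) − f⋆)/((k+1)h)). -/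
open RealInnerProductSpace

lemma descent_aux_s11 {n : ℕ}
    (f : EuclideanSpace ℝ (Fin n) → ℝ)
    (f' : EuclideanSpace ℝ (Fin n) → EuclideanSpace ℝ (Fin n))
    (hf : ∀ x, HasGradientAt f (f' x) x)
    (L : ℝ)
    (hLip : ∀ x y, ‖f' x - f' y‖ ≤ L * ‖x - y‖) (x v : EuclideanSpace ℝ (Fin n)) :
    f (x + v) ≤ f x + ⟪f' x, v⟫ + L / 2 * ‖v‖ ^ 2 := by
  have hd : ∀ t : ℝ, HasDerivAt
      (fun t : ℝ => f (x + t • v) - t * ⟪f' x, v⟫ - L / 2 * ‖v‖ ^ 2 * t ^ 2)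
      (⟪f' (x + t • v), v⟫ - ⟪f' x, v⟫ - L * ‖v‖ ^ 2 * t) t := by
    intro t
    have h1 : HasDerivAt (fun t : ℝ => x + t • v) v t := by
      simpa using ((hasDerivAt_id t).smul_const v).const_add x
    have h2 := ((hf (x + t • v)).hasFDerivAt).comp_hasDerivAt t h1
    have h3 := (h2.sub ((hasDerivAt_id t).mul_const ⟪f' x, v⟫)).sub
      (((hasDerivAt_id t).pow 2).const_mul (L / 2 * ‖v‖ ^ 2))
    refine HasDerivAt.congr_deriv (f := fun t : ℝ => f (x + t • v) - t * ⟪f' x, v⟫ - L / 2 * ‖v‖ ^ 2 * t ^ 2) h3 ?_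
    simp
    ring
  have hanti : AntitoneOn
      (fun t : ℝ => f (x + t • v) - t * ⟪f' x, v⟫ - L / 2 * ‖v‖ ^ 2 * t ^ 2)
      (Set.Icc 0 1) := by
    apply antitoneOn_of_deriv_nonpos (convex_Icc 0 1)
    · exact fun t _ => (hd t).continuousAt.continuousWithinAt
    · exact fun t _ => (hd t).differentiableAt.differentiableWithinAt
    · intro t ht
      rw [interior_Icc] at ht
      rw [(hd t).deriv, ← inner_sub_left]
      have h1 := real_inner_le_norm (f' (x + t • v) - f' x) v
      have h2 := hLip (x + t • v) x
      rw [add_sub_cancel_left, norm_smul, Real.norm_of_nonneg ht.1.le] at h2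
      have h3 := mul_le_mul_of_nonneg_right h2 (norm_nonneg v)
      nlinarith
  have := hanti (Set.left_mem_Icc.2 zero_le_one) (Set.right_mem_Icc.2 zero_le_one) zero_le_one
  simp at this
  linarith


/-- Gradient-norm rates for the Lagrange multiplier scheme (Theorem `thm:LMrate1`). -/
theorem stmt_11 (n : ℕ) (hn : 1 ≤ n)
    (f : EuclideanSpace ℝ (Fin n) → ℝ)
    (f' : EuclideanSpace ℝ (Fin n) → EuclideanSpace ℝ (Fin n))
    (hf : ∀ x, HasGradientAt f (f' x) x)
    (L : ℝ) (hL : 0 < L)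
    (hLip : ∀ x y, ‖f' x - f' y‖ ≤ L * ‖x - y‖)
    (xstar : EuclideanSpace ℝ (Fin n)) (hstar : ∀ y, f xstar ≤ f y)
    (h : ℝ) (hh : 0 < h)
    (x : ℕ → EuclideanSpace ℝ (Fin n)) (η : ℕ → ℝ) (hηpos : ∀ k, 0 < η k)
    (hscheme1 : ∀ k : ℕ, x (k + 1) = x k - (h * η k) • f' (x k))
    (hscheme2 : ∀ k : ℕ,
      f (x (k + 1)) - f (x k) = η k * ⟪f' (x k), x (k + 1) - x k⟫) :
    (Summable (fun k : ℕ => ‖f' (x k)‖ ^ 2) ∧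
      ∑' k : ℕ, ‖f' (x k)‖ ^ 2 ≤ (L * h / 2 + 1) ^ 2 * (f (x 0) - f xstar) / h) ∧
    ∀ k : ℕ, ∃ i ≤ k, ‖f' (x i)‖ ≤
      (L * h / 2 + 1) * Real.sqrt ((f (x 0) - f xstar) / ((k + 1) * h)) := by
  have hC : 0 < L * h / 2 + 1 := by positivity
  have key : ∀ k, ‖f' (x k)‖ ^ 2 ≤
      (L * h / 2 + 1) ^ 2 / h * (f (x k) - f (x (k + 1))) := by
    intro k
    have hη := hηpos k
    have e1 : x (k + 1) = x k + (-(h * η k)) • f' (x k) := by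
      rw [hscheme1 k, neg_smul, sub_eq_add_neg]
    have e2 : f (x (k + 1)) - f (x k) = - (h * η k ^ 2 * ‖f' (x k)‖ ^ 2) := by
      rw [hscheme2 k, e1, add_sub_cancel_left, inner_smul_right, real_inner_self_eq_norm_sq]
      ring
    have d := descent_aux_s11 f f' hf L hLip (x k) ((-(h * η k)) • f' (x k))
    rw [← e1, inner_smul_right, real_inner_self_eq_norm_sq, norm_smul, mul_pow,
      Real.norm_eq_abs, sq_abs] at d
    have e3 : f (x k) - f (x (k + 1)) = h * η k ^ 2 * ‖f' (x k)‖ ^ 2 := by linarith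
    rw [e3]
    have e4 : (L * h / 2 + 1) ^ 2 / h * (h * η k ^ 2 * ‖f' (x k)‖ ^ 2)
        = ((L * h / 2 + 1) * η k) ^ 2 * ‖f' (x k)‖ ^ 2 := by
      field_simp
    rw [e4]
    rcases (sq_nonneg ‖f' (x k)‖).eq_or_lt with h0 | h0
    · rw [← h0]; simp
    · have : 1 ≤ (L * h / 2 + 1) * η k := by
        by_contra hc
        push Not at hc
        have p : 0 < h * η k * ‖f' (x k)‖ ^ 2 := by positivity
        have := mul_lt_mul_of_pos_left hc p
        nlinarith
      have : 1 ≤ ((L * h / 2 + 1) * η k) ^ 2 := one_le_pow₀ this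
      nlinarith
  have hsum : ∀ m, ∑ i ∈ Finset.range m, ‖f' (x i)‖ ^ 2 ≤
      (L * h / 2 + 1) ^ 2 * (f (x 0) - f xstar) / h := by
    intro m
    calc ∑ i ∈ Finset.range m, ‖f' (x i)‖ ^ 2
        ≤ ∑ i ∈ Finset.range m, (L * h / 2 + 1) ^ 2 / h * (f (x i) - f (x (i + 1))) :=
          Finset.sum_le_sum fun i _ => key i
      _ = (L * h / 2 + 1) ^ 2 / h * (f (x 0) - f (x m)) := by
          rw [← Finset.mul_sum, Finset.sum_range_sub' (fun i => f (x i))]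
      _ ≤ (L * h / 2 + 1) ^ 2 / h * (f (x 0) - f xstar) := by
          have := hstar (x m)
          gcongr
      _ = _ := by ring
  refine ⟨⟨summable_of_sum_range_le (fun _ => sq_nonneg _) hsum,
    Real.tsum_le_of_sum_range_le (fun _ => sq_nonneg _) hsum⟩, fun k => ?_⟩
  by_contra hc
  push Not at hc
  have hD : 0 ≤ f (x 0) - f xstar := sub_nonneg.2 (hstar _)
  have hk : (0 : ℝ) < k + 1 := by positivity
  have hlt : ∑ i ∈ Finset.range (k + 1),
      (L * h / 2 + 1) ^ 2 * ((f (x 0) - f xstar) / ((k + 1) * h)) <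
      ∑ i ∈ Finset.range (k + 1), ‖f' (x i)‖ ^ 2 := by
    apply Finset.sum_lt_sum_of_nonempty (by simp)
    intro i hi
    have h1 := hc i (Nat.lt_succ_iff.1 (Finset.mem_range.1 hi))
    have h2 := pow_lt_pow_left₀ h1 (by positivity) two_ne_zero
    rwa [mul_pow, Real.sq_sqrt (by positivity)] at h2
  have h3 := hlt.trans_le (hsum (k + 1))
  rw [Finset.sum_const, Finset.card_range, nsmul_eq_mul] at h3
  push_cast at h3
  apply h3.ne
  field_simp
end

section
/- Assume in addition that f is coercive (f(x) → ∞ as ‖x‖ → ∞). Let (x_k), (η_k) satisfy the scheme with η_k > 0 for every k. Then the sequence (x_k) has an accumulation point, and every accumulation point x^* of (x_k) satisfies ∇f(x^*) = 0. -/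
open RealInnerProductSpace

/-- Accumulation points of the scheme are stationary (Theorem `thm:grobal`). -/
theorem stmt_12 (n : ℕ) (hn : 1 ≤ n)
    (f : EuclideanSpace ℝ (Fin n) → ℝ)
    (f' : EuclideanSpace ℝ (Fin n) → EuclideanSpace ℝ (Fin n))
    (hf : ∀ x, HasGradientAt f (f' x) x)
    (L : ℝ) (hL : 0 < L)
    (hLip : ∀ x y, ‖f' x - f' y‖ ≤ L * ‖x - y‖)
    (xstar : EuclideanSpace ℝ (Fin n)) (hstar : ∀ y, f xstar ≤ f y)
    (hcoercive : Filter.Tendsto f (Filter.cocompact (EuclideanSpace ℝ (Fin n))) Filter.atTop)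
    (h : ℝ) (hh : 0 < h)
    (x : ℕ → EuclideanSpace ℝ (Fin n)) (η : ℕ → ℝ) (hηpos : ∀ k, 0 < η k)
    (hscheme1 : ∀ k : ℕ, x (k + 1) = x k - (h * η k) • f' (x k))
    (hscheme2 : ∀ k : ℕ,
      f (x (k + 1)) - f (x k) = η k * ⟪f' (x k), x (k + 1) - x k⟫) :
    (∃ p : EuclideanSpace ℝ (Fin n), MapClusterPt p Filter.atTop x) ∧
    ∀ p : EuclideanSpace ℝ (Fin n), MapClusterPt p Filter.atTop x → f' p = 0 := by
  have key : ∀ a b, f b - f a - ⟪f' a, b - a⟫ ≤ L * ‖b - a‖ ^ 2 := by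
    intro a b
    have := (convex_segment a b).norm_image_sub_le_of_norm_hasFDerivWithin_le'
      (f := f) (f' := fun z => InnerProductSpace.toDual ℝ _ (f' z))
      (φ := InnerProductSpace.toDual ℝ _ (f' a)) (C := L * ‖b - a‖)
      (fun z _ => (hf z).hasFDerivAt.hasFDerivWithinAt)
      (fun z hz => by
        rw [← map_sub, LinearIsometryEquiv.norm_map]
        refine (hLip z a).trans ?_
        have h1 : ‖z - a‖ ≤ ‖b - a‖ := by
          obtain ⟨t, ht, rfl⟩ := (segment_eq_image' ℝ a b) ▸ hz
          simp only [add_sub_cancel_left, norm_smul, Real.norm_eq_abs, abs_of_nonneg ht.1]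
          exact mul_le_of_le_one_left (norm_nonneg _) ht.2
        gcongr)
      (left_mem_segment ℝ a b) (right_mem_segment ℝ a b)
    rw [InnerProductSpace.toDual_apply_apply] at this
    have h2 := (le_abs_self _).trans this
    linarith
  have hd : ∀ k, x (k + 1) - x k = -((h * η k) • f' (x k)) := by
    intro k
    rw [hscheme1 k]
    abel
  have hin : ∀ k, ⟪f' (x k), x (k + 1) - x k⟫ = -(h * η k * ‖f' (x k)‖ ^ 2) := by
    intro k
    rw [hd, inner_neg_right, inner_smul_right, real_inner_self_eq_norm_sq]
  have hdec : ∀ k, f (x k) - f (x (k + 1)) = h * η k ^ 2 * ‖f' (x k)‖ ^ 2 := by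
    intro k
    have := hscheme2 k
    rw [hin] at this
    linarith
  have hηlow : ∀ k, ‖f' (x k)‖ ^ 2 ≤ (1 + L * h) ^ 2 / h * (f (x k) - f (x (k + 1))) := by
    intro k
    rw [hdec]
    by_cases hg : f' (x k) = 0
    · simp [hg]
    have hG : 0 < ‖f' (x k)‖ ^ 2 := by positivity
    have hk := key (x k) (x (k + 1))
    have hηk := hηpos k
    have hnorm : ‖x (k + 1) - x k‖ ^ 2 = (h * η k) ^ 2 * ‖f' (x k)‖ ^ 2 := by
      rw [hd, norm_neg, norm_smul, mul_pow, Real.norm_eq_abs, sq_abs]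
    rw [hin, hnorm] at hk
    have hdk := hdec k
    generalize ‖f' (x k)‖ ^ 2 = G at *
    have h1 : 1 ≤ (1 + L * h) * η k := by
      have hpos : 0 < h * η k * G := by positivity
      have : (h * η k * G) * 1 ≤ (h * η k * G) * ((1 + L * h) * η k) := by nlinarith
      exact le_of_mul_le_mul_left this hpos
    have h2 : 1 ≤ ((1 + L * h) * η k) ^ 2 := one_le_pow₀ h1
    have h3 : (1 + L * h) ^ 2 / h * (h * η k ^ 2 * G) = ((1 + L * h) * η k) ^ 2 * G := by
      field_simp
    rw [h3]
    nlinarith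
  have hanti : Antitone (fun k => f (x k)) := antitone_nat_of_succ_le fun k => by
    have := hdec k
    have : 0 ≤ h * η k ^ 2 * ‖f' (x k)‖ ^ 2 := by positivity
    linarith
  constructor
  · have hev := hcoercive.eventually (Filter.eventually_gt_atTop (f (x 0)))
    obtain ⟨K, hK, hKs⟩ := Filter.mem_cocompact.1 hev
    have hmem : ∀ k, x k ∈ K := by
      intro k
      by_contra hc
      have h1 : f (x 0) < f (x k) := hKs hc
      exact absurd (hanti (Nat.zero_le k)) (not_le.2 h1)
    obtain ⟨p, _, hp⟩ := hK.exists_mapClusterPt (f := Filter.atTop) (u := x)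
      (Filter.tendsto_principal.2 (Filter.Eventually.of_forall hmem))
    exact ⟨p, hp⟩
  · intro p hp
    have hlim := tendsto_atTop_ciInf hanti
      ⟨f xstar, by rintro _ ⟨k, rfl⟩; exact hstar _⟩
    have hdiff := (hlim.sub (hlim.comp (Filter.tendsto_add_atTop_nat 1))).const_mul
      ((1 + L * h) ^ 2 / h)
    rw [sub_self, mul_zero] at hdiff
    have hsq : Filter.Tendsto (fun k => ‖f' (x k)‖ ^ 2) Filter.atTop (nhds 0) :=
      squeeze_zero (fun k => by positivity) hηlow hdiff
    have hcont : Continuous f' := by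
      have : LipschitzWith L.toNNReal f' := LipschitzWith.of_dist_le_mul fun a b => by
        rw [dist_eq_norm, dist_eq_norm, Real.coe_toNNReal _ hL.le]
        exact hLip a b
      exact this.continuous
    have hc2 : Continuous (fun z => ‖f' z‖ ^ 2) := by fun_prop
    have hcl : MapClusterPt (‖f' p‖ ^ 2) Filter.atTop (fun k => ‖f' (x k)‖ ^ 2) :=
      MapClusterPt.continuousAt_comp hc2.continuousAt hp
    have h0 : ‖f' p‖ ^ 2 = 0 := by
      have h1 : ClusterPt (‖f' p‖ ^ 2) (nhds (0:ℝ)) := ClusterPt.mono hcl hsq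
      have : (nhds (‖f' p‖ ^ 2) ⊓ nhds (0:ℝ)).NeBot := h1
      exact eq_of_nhds_neBot this
    simpa using h0
end

section
/- Assume f is convex and 0 < h ≤ 2/L. Let (x_k), (η_k) satisfy the scheme with η_k > 0 for every k. Then for every k ≥ 1, f(x_k) − f⋆ ≤ ((Lh + 2)/4) · ‖x₀ − x⋆‖²/(kh). -/
open RealInnerProductSpace

lemma line_deriv {E : Type*} [NormedAddCommGroup E] [InnerProductSpace ℝ E] [CompleteSpace E]
    {f : E → ℝ} {f' : E → E} (hf : ∀ x, HasGradientAt f (f' x) x) (x d : E) (t : ℝ) :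
    HasDerivAt (fun s : ℝ => f (x + s • d)) (inner ℝ (f' (x + t • d)) d) t := by
  have h1 : HasDerivAt (fun s : ℝ => x + s • d) d t := by
    simpa using ((hasDerivAt_id t).smul_const d).const_add x
  have h2 := (hf (x + t • d)).hasFDerivAt.comp_hasDerivAt t h1
  simp only [InnerProductSpace.toDual_apply_apply] at h2
  exact h2

lemma descent {E : Type*} [NormedAddCommGroup E] [InnerProductSpace ℝ E] [CompleteSpace E]
    {f : E → ℝ} {f' : E → E} (hf : ∀ x, HasGradientAt f (f' x) x) {L : ℝ}
    (hLip : ∀ x y, ‖f' x - f' y‖ ≤ L * ‖x - y‖) (x d : E) :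
    f (x + d) ≤ f x + inner ℝ (f' x) d + L / 2 * ‖d‖ ^ 2 := by
  have hd : ∀ t : ℝ, HasDerivAt
      (fun s : ℝ => f (x + s • d) - s * inner ℝ (f' x) d - s ^ 2 * (L / 2 * ‖d‖ ^ 2))
      (inner ℝ (f' (x + t • d)) d - 1 * inner ℝ (f' x) d - (2 * t) * (L / 2 * ‖d‖ ^ 2)) t := by
    intro t
    have h2 : HasDerivAt (fun s : ℝ => s ^ 2) (2 * t) t := by simpa using hasDerivAt_pow 2 t
    exact ((line_deriv hf x d t).sub ((hasDerivAt_id t).mul_const _)).sub (h2.mul_const _)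
  have hanti : AntitoneOn
      (fun s : ℝ => f (x + s • d) - s * inner ℝ (f' x) d - s ^ 2 * (L / 2 * ‖d‖ ^ 2))
      (Set.Icc 0 1) := by
    apply antitoneOn_of_deriv_nonpos (convex_Icc 0 1)
    · exact fun t _ => (hd t).continuousAt.continuousWithinAt
    · exact fun t _ => (hd t).differentiableAt.differentiableWithinAt
    · intro t ht
      rw [interior_Icc] at ht
      rw [(hd t).deriv]
      have h1 := real_inner_le_norm (f' (x + t • d) - f' x) d
      have h2 := hLip (x + t • d) x
      rw [add_sub_cancel_left, norm_smul, Real.norm_of_nonneg ht.1.le] at h2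
      have h3 := mul_le_mul_of_nonneg_right h2 (norm_nonneg d)
      rw [inner_sub_left] at h1
      nlinarith
  have := hanti (Set.left_mem_Icc.2 zero_le_one) (Set.right_mem_Icc.2 zero_le_one) zero_le_one
  simp at this
  linarith

lemma convex_grad {E : Type*} [NormedAddCommGroup E] [InnerProductSpace ℝ E] [CompleteSpace E]
    {f : E → ℝ} {f' : E → E} (hf : ∀ x, HasGradientAt f (f' x) x)
    (hconv : ConvexOn ℝ Set.univ f) (x y : E) :
    f x + inner ℝ (f' x) (y - x) ≤ f y := by
  have hc : ConvexOn ℝ Set.univ (fun s : ℝ => f (x + s • (y - x))) := by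
    have := hconv.comp_affineMap (AffineMap.lineMap x y : ℝ →ᵃ[ℝ] E)
    rw [Set.preimage_univ] at this
    have e : (fun s : ℝ => f (x + s • (y - x))) = f ∘ (AffineMap.lineMap x y : ℝ →ᵃ[ℝ] E) := by
      funext s
      simp [AffineMap.lineMap_apply, add_comm]
    rw [e]
    exact this
  have := hc.le_slope_of_hasDerivAt (Set.mem_univ 0) (Set.mem_univ 1) zero_lt_one
    (line_deriv hf x (y - x) 0)
  simp [slope_def_field] at this
  linarith

/-- O(1/k) rate for convex functions (Theorem `thm:LMrate2`). -/
theorem stmt_13 (n : ℕ) (hn : 1 ≤ n)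
    (f : EuclideanSpace ℝ (Fin n) → ℝ)
    (f' : EuclideanSpace ℝ (Fin n) → EuclideanSpace ℝ (Fin n))
    (hf : ∀ x, HasGradientAt f (f' x) x)
    (L : ℝ) (hL : 0 < L)
    (hLip : ∀ x y, ‖f' x - f' y‖ ≤ L * ‖x - y‖)
    (xstar : EuclideanSpace ℝ (Fin n)) (hstar : ∀ y, f xstar ≤ f y)
    (hconv : ConvexOn ℝ Set.univ f)
    (h : ℝ) (hh : 0 < h)
    (x : ℕ → EuclideanSpace ℝ (Fin n)) (η : ℕ → ℝ) (hηpos : ∀ k, 0 < η k)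
    (hscheme1 : ∀ k : ℕ, x (k + 1) = x k - (h * η k) • f' (x k))
    (hscheme2 : ∀ k : ℕ,
      f (x (k + 1)) - f (x k) = η k * ⟪f' (x k), x (k + 1) - x k⟫)
    (hh2 : h ≤ 2 / L) :
    ∀ k : ℕ, 1 ≤ k →
      f (x k) - f xstar ≤ ((L * h + 2) / 4) * (‖x 0 - xstar‖ ^ 2 / (k * h)) := by
  have hLh : L * h ≤ 2 := by
    rw [le_div_iff₀ hL] at hh2; linarith
  have hdec : ∀ k, f (x (k + 1)) - f (x k) = -(h * η k ^ 2 * ‖f' (x k)‖ ^ 2) := by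
    intro k
    rw [hscheme2, hscheme1, sub_sub_cancel_left, inner_neg_right, inner_smul_right,
      real_inner_self_eq_norm_sq]
    ring
  have step : ∀ k, 4 * h * (f (x (k + 1)) - f xstar) ≤
      (L * h + 2) * (‖x k - xstar‖ ^ 2 - ‖x (k + 1) - xstar‖ ^ 2) := by
    intro k
    have hη := hηpos k
    have hk := hdec k
    have hc := convex_grad hf hconv (x k) xstar
    have hs := hstar (x k)
    have hs1 := hstar (x (k + 1))
    by_cases hg : f' (x k) = 0
    · have hx : x (k + 1) = x k := by rw [hscheme1, hg]; simp
      rw [hx]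
      rw [hg, inner_zero_left] at hc
      have : f (x k) - f xstar = 0 := by linarith
      rw [this]; simp
    · have hG : 0 < ‖f' (x k)‖ ^ 2 := by positivity
      have hD := descent hf hLip (x k) (-((h * η k) • f' (x k)))
      rw [← sub_eq_add_neg, ← hscheme1, inner_neg_right, inner_smul_right,
        real_inner_self_eq_norm_sq, norm_neg, norm_smul, mul_pow, Real.norm_eq_abs, sq_abs] at hD
      have hm : 2 ≤ η k * (L * h + 2) := by
        have h1 : 0 ≤ (h * η k * ‖f' (x k)‖ ^ 2) * (η k * (L * h + 2) - 2) := by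
          nlinarith
        have h2 : 0 < h * η k * ‖f' (x k)‖ ^ 2 := by positivity
        have := nonneg_of_mul_nonneg_right h1 h2
        linarith
      have hn2 : ‖x (k + 1) - xstar‖ ^ 2 = ‖x k - xstar‖ ^ 2
          + 2 * (h * η k) * inner ℝ (f' (x k)) (xstar - x k)
          + (h * η k) ^ 2 * ‖f' (x k)‖ ^ 2 := by
        have e : x (k + 1) - xstar = (x k - xstar) - (h * η k) • f' (x k) := by
          rw [hscheme1]; abel
        rw [e, norm_sub_sq_real, inner_smul_right, norm_smul, mul_pow, Real.norm_eq_abs, sq_abs,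
          real_inner_comm, ← neg_sub (x k) xstar, inner_neg_right]
        ring
      generalize inner ℝ (f' (x k)) (xstar - x k) = I at *
      have hA : 2 * (h * η k) * (f (x k) - f xstar) ≤
          ‖x k - xstar‖ ^ 2 - ‖x (k + 1) - xstar‖ ^ 2 + h * (f (x k) - f (x (k + 1))) := by
        have : 2 * (h * η k) * (f (x k) - f xstar) ≤ 2 * (h * η k) * (-I) :=
          mul_le_mul_of_nonneg_left (by linarith) (by positivity)
        have e : h * (f (x k) - f (x (k + 1))) = (h * η k) ^ 2 * ‖f' (x k)‖ ^ 2 := by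
          linear_combination (-h) * hk
        linarith
      have hmono : 0 ≤ f (x k) - f (x (k + 1)) := by
        have : 0 ≤ h * η k ^ 2 * ‖f' (x k)‖ ^ 2 := by positivity
        linarith
      have hB := mul_le_mul_of_nonneg_left hA (by positivity : 0 ≤ L * h + 2)
      have hC : 0 ≤ (2 - L * h) * (h * (f (x k) - f (x (k + 1)))) :=
        mul_nonneg (by linarith) (mul_nonneg hh.le hmono)
      have hE : 0 ≤ (η k * (L * h + 2) - 2) * (2 * h * (f (x k) - f xstar)) :=
        mul_nonneg (by linarith) (mul_nonneg (by positivity) (by linarith))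
      linarith
  have main : ∀ k : ℕ, 4 * h * (k * (f (x k) - f xstar)) ≤
      (L * h + 2) * (‖x 0 - xstar‖ ^ 2 - ‖x k - xstar‖ ^ 2) := by
    intro k
    induction k with
    | zero => simp
    | succ k ih =>
      have hs := step k
      have hmono : f (x (k + 1)) ≤ f (x k) := by
        have h1 := hdec k
        have : 0 ≤ h * η k ^ 2 * ‖f' (x k)‖ ^ 2 := by positivity
        linarith
      have : 0 ≤ 4 * h * (k * (f (x k) - f (x (k + 1)))) :=
        mul_nonneg (by positivity) (mul_nonneg (by positivity) (by linarith))
      push_cast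
      linarith
  intro k hk
  have hk' : (0 : ℝ) < k := by exact_mod_cast hk
  have := main k
  have h2 : 0 ≤ (L * h + 2) * ‖x k - xstar‖ ^ 2 := by positivity
  rw [div_mul_div_comm, le_div_iff₀ (by positivity)]
  linarith
end

section
/- Let α ∈ (0, 1), η* ∈ (0, α), L > 0, and set h_LB := 2(α − η*)/(η*L). Let (h_k) and (η_k) be sequences of positive reals satisfying η_k ≥ 2α/(Lh_k + 2) and h_{k+1} = h_kη_k/η* for all k ≥ 0. If h₀ ≥ h_LB, then h_k ≥ h_LB for every k ≥ 0. -/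
/-- Lower bound on the adaptive step sizes. -/
theorem stmt_18 (α ηs L : ℝ) (hα0 : 0 < α) (hα1 : α < 1)
    (hηs0 : 0 < ηs) (hηsα : ηs < α) (hL : 0 < L)
    (h η : ℕ → ℝ)
    (hhpos : ∀ k : ℕ, 0 < h k) (hηpos : ∀ k : ℕ, 0 < η k)
    (hlb : ∀ k : ℕ, 2 * α / (L * h k + 2) ≤ η k)
    (hupd : ∀ k : ℕ, h (k + 1) = h k * η k / ηs)
    (h0 : 2 * (α - ηs) / (ηs * L) ≤ h 0) :
    ∀ k : ℕ, 2 * (α - ηs) / (ηs * L) ≤ h k := by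
  intro k
  induction k with
  | zero => exact h0
  | succ k ih =>
    have hx := hhpos k
    have hd : 0 < L * h k + 2 := by positivity
    have h1 := hlb k
    rw [div_le_iff₀ hd] at h1
    rw [div_le_iff₀ (by positivity)] at ih
    rw [hupd, div_le_div_iff₀ (by positivity) hηs0]
    have key : 2 * (α - ηs) ≤ h k * η k * L := by
      refine le_of_mul_le_mul_right ?_ hd
      have h2 := mul_le_mul_of_nonneg_left h1 (mul_pos hx hL).le
      nlinarith [h2, ih]
    nlinarith [mul_le_mul_of_nonneg_left key hηs0.le]
end
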